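/- Let X ∈ ℝ^d, Y ∈ ℝ^q with joint law P_{X,Y} having finite first moment, and let η be a random vector in ℝ^m independent of X. Suppose there exists at least one measurable G₀ : ℝ^m × ℝ^d → ℝ^q such that the law of (X, G₀(η, X)) equals P_{X,Y}. For a measurable G : ℝ^m × ℝ^d → ℝ^q such that (X, G(η, X)) has finite first moment, define W(G) = sup { E f(X, G(η, X)) − E f(X, Y) : f : ℝ^{d+q} → ℝ is 1-Lipschitz }. Then G* minimizes W over all such measurable G if and only if the law of (X, G*(η, X)) equals P_{X,Y}; and in that case, for P_X-almost every x, the law of G*(η, x) equals the conditional distribution P_{Y|X=x}. -/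

import Mathlib

/-!
The dual objective `W` is nonnegative because constants are admissible. Under finite first moments
it vanishes exactly when the two laws agree, since integrals of 1-Lipschitz functions determine a
probability measure.
As `G₀` attains the value `0`, the minimizers of `W` are precisely its zeros. Once the joint laws
agree, independence of `η` and `X` lets Fubini disintegrate the law of `(X, G*(η, X))` over `X`
with fibre the law of `G*(η, x)`, and uniqueness of disintegrations gives the conditional law.
-/

open MeasureTheory ProbabilityTheory

/-- The Wasserstein-type objective `W(G) = sup_{f 1-Lipschitz} E f(X, G(η,X)) − E f(X,Y)`. -/
noncomputable def wassersteinObjective {d q m : ℕ} {Ω : Type*} [MeasurableSpace Ω]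
    (P : Measure Ω) (X : Ω → Fin d → ℝ) (Y : Ω → Fin q → ℝ) (η : Ω → Fin m → ℝ)
    (G : (Fin m → ℝ) × (Fin d → ℝ) → Fin q → ℝ) : ℝ :=
  sSup {r : ℝ | ∃ f : (Fin d → ℝ) × (Fin q → ℝ) → ℝ, LipschitzWith 1 f ∧
    r = (∫ ω, f (X ω, G (η ω, X ω)) ∂P) - ∫ ω, f (X ω, Y ω) ∂P}

section WassersteinDual

variable {Ω Ω' E : Type*} [MeasurableSpace Ω] [MeasurableSpace Ω'] {P : Measure Ω} {P' : Measure Ω'}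

/-- The Kantorovich–Rubinstein dual form of the 1-Wasserstein distance between the laws of `Z`
and `Z'`. It is phrased through random variables so that `wassersteinObjective` is an instance by
definition. If the set is unbounded, the junk value of `sSup` is `0`; finite first moments exclude
this. -/
noncomputable def wassersteinDual [PseudoEMetricSpace E] (Z : Ω → E) (Z' : Ω' → E)
    (P : Measure Ω) (P' : Measure Ω') : ℝ :=
  sSup {r : ℝ | ∃ f : E → ℝ, LipschitzWith 1 f ∧ r = (∫ ω, f (Z ω) ∂P) - ∫ ω, f (Z' ω) ∂P'}

lemma wassersteinDual_nonneg [PseudoEMetricSpace E] (Z : Ω → E) (Z' : Ω' → E) :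
    0 ≤ wassersteinDual Z Z' P P' :=
  Real.sSup_nonneg' ⟨0, ⟨fun _ => 0, LipschitzWith.const' 0, by simp⟩, le_rfl⟩

lemma wassersteinDual_eq_zero_of_identDistrib [PseudoEMetricSpace E] [MeasurableSpace E]
    [OpensMeasurableSpace E] {Z : Ω → E} {Z' : Ω' → E} (h : IdentDistrib Z Z' P P') :
    wassersteinDual Z Z' P P' = 0 := by
  refine le_antisymm (Real.sSup_nonpos ?_) (wassersteinDual_nonneg Z Z')
  rintro r ⟨f, hf, rfl⟩
  exact (sub_eq_zero.2 (h.comp hf.continuous.measurable).integral_eq).le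

lemma measure_eq_of_forall_lipschitzWith_one_integral_eq [PseudoEMetricSpace E]
    [MeasurableSpace E] [BorelSpace E] {μ ν : Measure E} [IsProbabilityMeasure μ]
    [IsProbabilityMeasure ν]
    (h : ∀ f : E → ℝ, LipschitzWith 1 f → ∫ x, f x ∂μ = ∫ x, f x ∂ν) : μ = ν := by
  have lipschitz_eq (f : E → ℝ) (L : NNReal) (hf : LipschitzWith L f) :
      ∫ x, f x ∂μ = ∫ x, f x ∂ν := by
    have hscaled : LipschitzWith 1 fun x => (L + 1 : ℝ)⁻¹ • f x := by
      refine ((lipschitzWith_smul (L + 1 : ℝ)⁻¹).comp hf).weaken ?_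
      rw [← NNReal.coe_le_coe]
      push_cast
      rw [Real.norm_of_nonneg (by positivity), inv_mul_le_one₀ (by positivity)]
      linarith
    have := h _ hscaled
    rw [integral_smul, integral_smul] at this
    exact smul_right_injective ℝ (by positivity) this
  -- A constant sequence converging weakly to another measure equals its limit.
  let μ' : ProbabilityMeasure E := ⟨μ, inferInstance⟩
  let ν' : ProbabilityMeasure E := ⟨ν, inferInstance⟩
  have hlim : Filter.Tendsto (fun _ : ℕ => μ') Filter.atTop (nhds ν') :=
    tendsto_iff_forall_lipschitz_integral_tendsto.2 fun f _ ⟨L, hf⟩ =>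
      tendsto_const_nhds.congr fun _ => (lipschitz_eq f L hf).symm
  have hμν : μ' = ν' := tendsto_nhds_unique tendsto_const_nhds hlim
  exact congrArg Subtype.val hμν

section FirstMoment

variable [PseudoMetricSpace E] [MeasurableSpace E] {Z : Ω → E} {Z' : Ω' → E} {z₀ : E}

lemma integrable_lipschitzWith_comp [OpensMeasurableSpace E] {H : Type*} [NormedAddCommGroup H]
    [SecondCountableTopologyEither E H] [IsFiniteMeasure P] {K : NNReal} {f : E → H}
    (hf : LipschitzWith K f) (hZ : AEMeasurable Z P)
    (hZmom : Integrable (fun ω => dist (Z ω) z₀) P) :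
    Integrable (fun ω => f (Z ω)) P := by
  refine ((hZmom.const_mul (K : ℝ)).add (integrable_const ‖f z₀‖)).mono'
    (hf.continuous.stronglyMeasurable.aestronglyMeasurable.comp_aemeasurable hZ)
    (ae_of_all _ fun ω => ?_)
  calc ‖f (Z ω)‖ ≤ ‖f (Z ω) - f z₀‖ + ‖f z₀‖ := norm_le_norm_sub_add _ _
    _ ≤ K * dist (Z ω) z₀ + ‖f z₀‖ := by
      gcongr
      exact dist_eq_norm (f (Z ω)) (f z₀) ▸ hf.dist_le_mul (Z ω) z₀

lemma norm_integral_lipschitzWith_comp_sub_le [OpensMeasurableSpace E] {H : Type*}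
    [NormedAddCommGroup H] [NormedSpace ℝ H] [CompleteSpace H] [SecondCountableTopologyEither E H]
    [IsProbabilityMeasure P] {K : NNReal} {f : E → H} (hf : LipschitzWith K f)
    (hZ : AEMeasurable Z P) (hZmom : Integrable (fun ω => dist (Z ω) z₀) P) :
    ‖(∫ ω, f (Z ω) ∂P) - f z₀‖ ≤ K * ∫ ω, dist (Z ω) z₀ ∂P := by
  have hcentre : (∫ ω, f (Z ω) ∂P) - f z₀ = ∫ ω, (f (Z ω) - f z₀) ∂P := by
    rw [integral_sub (integrable_lipschitzWith_comp hf hZ hZmom) (integrable_const _),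
      integral_const, probReal_univ, one_smul]
  rw [hcentre, ← integral_const_mul]
  refine norm_integral_le_of_norm_le (hZmom.const_mul _) (ae_of_all _ fun ω => ?_)
  exact dist_eq_norm (f (Z ω)) (f z₀) ▸ hf.dist_le_mul (Z ω) z₀

variable [IsProbabilityMeasure P] [IsProbabilityMeasure P']

lemma integral_sub_integral_le_wassersteinDual [OpensMeasurableSpace E] {f : E → ℝ}
    (hf : LipschitzWith 1 f) (hZ : AEMeasurable Z P) (hZ' : AEMeasurable Z' P')
    (hZmom : Integrable (fun ω => dist (Z ω) z₀) P)
    (hZ'mom : Integrable (fun ω => dist (Z' ω) z₀) P') :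
    (∫ ω, f (Z ω) ∂P) - ∫ ω, f (Z' ω) ∂P' ≤ wassersteinDual Z Z' P P' := by
  refine le_csSup ⟨(∫ ω, dist (Z ω) z₀ ∂P) + ∫ ω, dist (Z' ω) z₀ ∂P', ?_⟩ ⟨f, hf, rfl⟩
  rintro r ⟨g, hg, rfl⟩
  have hgZ := norm_integral_lipschitzWith_comp_sub_le hg hZ hZmom
  have hgZ' := norm_integral_lipschitzWith_comp_sub_le hg hZ' hZ'mom
  rw [NNReal.coe_one, one_mul, Real.norm_eq_abs, abs_le] at hgZ hgZ'
  linarith [hgZ.2, hgZ'.1]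

theorem wassersteinDual_eq_zero_iff_identDistrib [BorelSpace E] (hZ : AEMeasurable Z P)
    (hZ' : AEMeasurable Z' P') (hZmom : Integrable (fun ω => dist (Z ω) z₀) P)
    (hZ'mom : Integrable (fun ω => dist (Z' ω) z₀) P') :
    wassersteinDual Z Z' P P' = 0 ↔ IdentDistrib Z Z' P P' := by
  refine ⟨fun hzero => ⟨hZ, hZ', ?_⟩, wassersteinDual_eq_zero_of_identDistrib⟩
  have le_zero (f : E → ℝ) (hf : LipschitzWith 1 f) :
      (∫ ω, f (Z ω) ∂P) - ∫ ω, f (Z' ω) ∂P' ≤ 0 :=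
    hzero ▸ integral_sub_integral_le_wassersteinDual hf hZ hZ' hZmom hZ'mom
  have := Measure.isProbabilityMeasure_map hZ
  have := Measure.isProbabilityMeasure_map hZ'
  refine measure_eq_of_forall_lipschitzWith_one_integral_eq fun f hf => ?_
  rw [integral_map hZ hf.continuous.measurable.aestronglyMeasurable,
    integral_map hZ' hf.continuous.measurable.aestronglyMeasurable]
  have hpos := le_zero f hf
  have hneg := le_zero (fun z => -f z) hf.neg
  rw [integral_neg, integral_neg] at hneg
  linarith

end FirstMoment

end WassersteinDual

section GeneratorKernel

variable {Ω S E F : Type*} [MeasurableSpace Ω] [MeasurableSpace S] [MeasurableSpace E]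
  [MeasurableSpace F] {G : S × E → F}

/-- The conditional generator as a Markov kernel: `x` is sent to the law of `G (s, x)` for noise
`s` distributed according to `ν`. -/
noncomputable def generatorKernel (ν : Measure S) (G : S × E → F) : Kernel E F :=
  (Kernel.const E ν ×ₖ Kernel.id).map G

instance (ν : Measure S) [SFinite ν] : IsSFiniteKernel (generatorKernel (E := E) ν G) := by
  unfold generatorKernel; infer_instance

instance (ν : Measure S) [IsFiniteMeasure ν] : IsFiniteKernel (generatorKernel (E := E) ν G) := by
  unfold generatorKernel; infer_instance

lemma generatorKernel_apply (ν : Measure S) [SFinite ν] (hG : Measurable G) (x : E) :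
    generatorKernel ν G x = ν.map fun s => G (s, x) := by
  rw [generatorKernel, Kernel.map_apply _ hG, Kernel.prod_apply, Kernel.const_apply,
    Kernel.id_apply, Measure.prod_dirac, Measure.map_map hG (by fun_prop)]
  rfl

lemma map_prod_eq_compProd_generatorKernel (μ : Measure E) (ν : Measure S) [SFinite μ]
    [SFinite ν] (hG : Measurable G) :
    (μ.prod ν).map (fun p => (p.1, G (p.2, p.1))) = μ ⊗ₘ generatorKernel ν G := by
  have hgraph : Measurable fun p : E × S => (p.1, G (p.2, p.1)) := by fun_prop
  ext s hs
  rw [Measure.map_apply hgraph hs, Measure.prod_apply (hgraph hs), Measure.compProd_apply hs]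
  refine lintegral_congr fun x => ?_
  rw [generatorKernel_apply ν hG, Measure.map_apply (by fun_prop) (measurable_prodMk_left hs)]
  rfl

lemma map_prodMk_eq_compProd_generatorKernel {P : Measure Ω} [IsFiniteMeasure P] {X : Ω → E}
    {η : Ω → S} (hX : AEMeasurable X P) (hη : AEMeasurable η P) (hind : IndepFun η X P)
    (hG : Measurable G) :
    P.map (fun ω => (X ω, G (η ω, X ω))) = P.map X ⊗ₘ generatorKernel (P.map η) G := by
  rw [← map_prod_eq_compProd_generatorKernel _ _ hG,
    ← (indepFun_iff_map_prod_eq_prod_map_map hX hη).1 hind.symm,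
    AEMeasurable.map_map_of_aemeasurable (by fun_prop) (by fun_prop)]
  rfl

theorem ae_map_generator_eq_condDistrib [StandardBorelSpace F] [Nonempty F] {P : Measure Ω}
    [IsFiniteMeasure P] {X : Ω → E} {Y : Ω → F} {η : Ω → S} (hX : AEMeasurable X P)
    (hY : AEMeasurable Y P) (hη : AEMeasurable η P) (hind : IndepFun η X P) (hG : Measurable G)
    (hlaw : P.map (fun ω => (X ω, G (η ω, X ω))) = P.map (fun ω => (X ω, Y ω))) :
    ∀ᵐ x ∂P.map X, P.map (fun ω => G (η ω, x)) = condDistrib Y X P x := by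
  have hdisint := hlaw.symm.trans (map_prodMk_eq_compProd_generatorKernel hX hη hind hG)
  filter_upwards [condDistrib_ae_eq_of_measure_eq_compProd X hY hdisint] with x hx
  rw [hx, generatorKernel_apply _ hG, AEMeasurable.map_map_of_aemeasurable (by fun_prop) hη]
  rfl

end GeneratorKernel

theorem minimizer_iff_law_eq_and_conditional_general
    {Ω S E F : Type*} [MeasurableSpace Ω] [MeasurableSpace S]
    [PseudoMetricSpace E] [MeasurableSpace E] [BorelSpace E]
    [PseudoMetricSpace F] [MeasurableSpace F] [BorelSpace F] [StandardBorelSpace F] [Nonempty F]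
    [SecondCountableTopologyEither E F]
    {P : Measure Ω} [IsProbabilityMeasure P] {X : Ω → E} {Y : Ω → F} {η : Ω → S}
    (hX : AEMeasurable X P) (hY : AEMeasurable Y P) (hη : AEMeasurable η P) (z₀ : E × F)
    (hmom : Integrable (fun ω => dist (X ω, Y ω) z₀) P) (hind : IndepFun η X P)
    {G₀ : S × E → F} (hG₀ : Measurable G₀)
    (hG₀law : P.map (fun ω => (X ω, G₀ (η ω, X ω))) = P.map (fun ω => (X ω, Y ω)))
    {Gs : S × E → F} (hGs : Measurable Gs)
    (hGsmom : Integrable (fun ω => dist (X ω, Gs (η ω, X ω)) z₀) P) :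
    ((∀ G : S × E → F, Measurable G → Integrable (fun ω => dist (X ω, G (η ω, X ω)) z₀) P →
        wassersteinDual (fun ω => (X ω, Gs (η ω, X ω))) (fun ω => (X ω, Y ω)) P P
          ≤ wassersteinDual (fun ω => (X ω, G (η ω, X ω))) (fun ω => (X ω, Y ω)) P P)
      ↔ P.map (fun ω => (X ω, Gs (η ω, X ω))) = P.map (fun ω => (X ω, Y ω)))
    ∧ (P.map (fun ω => (X ω, Gs (η ω, X ω))) = P.map (fun ω => (X ω, Y ω)) →
        ∀ᵐ x ∂P.map X, P.map (fun ω => Gs (η ω, x)) = condDistrib Y X P x) := by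
  have hXY : AEMeasurable (fun ω => (X ω, Y ω)) P := by fun_prop
  have hXG {G : S × E → F} (hG : Measurable G) :
      AEMeasurable (fun ω => (X ω, G (η ω, X ω))) P := by fun_prop
  refine ⟨⟨fun hmin => ?_, fun hlaw G _ _ => ?_⟩,
    ae_map_generator_eq_condDistrib hX hY hη hind hGs⟩
  · have hident₀ : IdentDistrib _ _ P P := ⟨hXG hG₀, hXY, hG₀law⟩
    have hG₀mom : Integrable (fun ω => dist (X ω, G₀ (η ω, X ω)) z₀) P :=
      (hident₀.comp (u := (dist · z₀)) (by fun_prop)).integrable_iff.2 hmom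
    have hnonpos := hmin G₀ hG₀ hG₀mom
    rw [wassersteinDual_eq_zero_of_identDistrib hident₀] at hnonpos
    have hzero := hnonpos.antisymm (wassersteinDual_nonneg _ _)
    exact ((wassersteinDual_eq_zero_iff_identDistrib (hXG hGs) hXY hGsmom hmom).1 hzero).map_eq
  · rw [wassersteinDual_eq_zero_of_identDistrib ⟨hXG hGs, hXY, hlaw⟩]
    exact wassersteinDual_nonneg _ _

/-- `G*` minimizes the dual 1-Wasserstein objective `W` over all measurable generators with
finite first moment if and only if the law of `(X, G*(η, X))` equals `P_{X,Y}`; and in that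
case, for `P_X`-almost every `x`, the law of `G*(η, x)` equals the conditional distribution
of `Y` given `X = x`. -/
theorem minimizer_iff_law_eq_and_conditional
    (d q m : ℕ)
    {Ω : Type*} [MeasurableSpace Ω] (P : Measure Ω) [IsProbabilityMeasure P]
    (X : Ω → Fin d → ℝ) (Y : Ω → Fin q → ℝ) (η : Ω → Fin m → ℝ)
    (hX : Measurable X) (hY : Measurable Y) (hη : Measurable η)
    (hmom : Integrable (fun ω => ‖(X ω, Y ω)‖) P)
    (hind : IndepFun η X P)
    (G₀ : (Fin m → ℝ) × (Fin d → ℝ) → Fin q → ℝ) (hG₀ : Measurable G₀)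
    (hG₀law : Measure.map (fun ω => (X ω, G₀ (η ω, X ω))) P
      = Measure.map (fun ω => (X ω, Y ω)) P)
    (Gs : (Fin m → ℝ) × (Fin d → ℝ) → Fin q → ℝ) (hGs : Measurable Gs)
    (hGsmom : Integrable (fun ω => ‖(X ω, Gs (η ω, X ω))‖) P) :
    ((∀ G : (Fin m → ℝ) × (Fin d → ℝ) → Fin q → ℝ, Measurable G →
        Integrable (fun ω => ‖(X ω, G (η ω, X ω))‖) P →
        wassersteinObjective P X Y η Gs ≤ wassersteinObjective P X Y η G)
      ↔ Measure.map (fun ω => (X ω, Gs (η ω, X ω))) P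
          = Measure.map (fun ω => (X ω, Y ω)) P)
    ∧ (Measure.map (fun ω => (X ω, Gs (η ω, X ω))) P
          = Measure.map (fun ω => (X ω, Y ω)) P →
        ∀ᵐ x ∂(Measure.map X P),
          Measure.map (fun ω => Gs (η ω, x)) P = condDistrib Y X P x) := by
  simp only [← dist_zero_right] at hmom hGsmom ⊢
  exact minimizer_iff_law_eq_and_conditional_general hX.aemeasurable hY.aemeasurable
    hη.aemeasurable 0 hmom hind hG₀ hG₀law hGs hGsmom
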